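/- Suppose in addition that E and F are finite sets, φ is the counting measure on F, and the signal transition matrix P is aperiodic. If there exist y_1, …, y_n ∈ F such that the matrix N = M(y_1)⋯M(y_n) is nonzero and subrectangular (i.e. N_{ij} > 0 and N_{kl} > 0 imply N_{il} > 0 and N_{kj} > 0), then the filter transition kernel Π admits a unique Π-invariant probability measure on P(E). -/

import Mathlib

open MeasureTheory Filter Topology ENNReal

/-- `P(E)`: probability vectors on a countable set `E`, with the topology of
pointwise (equivalently, weak) convergence inherited from `E → ℝ`. -/
abbrev ProbVec (E : Type*) := {p : E → ℝ // (∀ i, 0 ≤ p i) ∧ HasSum p 1}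

/-- Row-vector/matrix product `(p M(y))_j = ∑_i p_i M_{ij}(y)`. -/
noncomputable def rowMul {E F : Type*} (M : F → E → E → ℝ) (p : E → ℝ) (y : F) : E → ℝ :=
  fun j => ∑' i, p i * M y i j

/-- Iterated product `p M(y₁)⋯M(yₙ)` along a list of observations. -/
noncomputable def rowIter {E F : Type*} (M : F → E → E → ℝ) (p : E → ℝ) (ys : List F) : E → ℝ :=
  ys.foldl (rowMul M) p

/-- `p 1 = ∑_j p_j`. -/
noncomputable def rowTot {E : Type*} (p : E → ℝ) : ℝ := ∑' j, p j

/-- One step of the filter: `μ ↦ μM(y)/(μM(y)1)` (junk value `μ` when undefined). -/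
noncomputable def filterStep {E F : Type*} (M : F → E → E → ℝ) (μ : ProbVec E) (y : F) :
    ProbVec E := by
  classical
  exact if h : ∃ ν : ProbVec E, ∀ j,
      (ν : E → ℝ) j * rowTot (rowMul M (μ : E → ℝ) y) = rowMul M (μ : E → ℝ) y j
    then h.choose else μ

/-- The filter `μM(y₁)⋯M(yₙ)/(μM(y₁)⋯M(yₙ)1)` (junk value `μ` when undefined). -/
noncomputable def filterList {E F : Type*} (M : F → E → E → ℝ) (μ : ProbVec E) (ys : List F) :
    ProbVec E := by
  classical
  exact if h : ∃ ν : ProbVec E, ∀ j,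
      (ν : E → ℝ) j * rowTot (rowIter M (μ : E → ℝ) ys) = rowIter M (μ : E → ℝ) ys j
    then h.choose else μ

/-- The filter `π_n^μ(y)` as a function of the observation path `y : ℕ → F`
(the coordinate `y k` represents the observation `y_{k+1}`). -/
noncomputable def filterSeq {E F : Type*} (M : F → E → E → ℝ) (μ : ProbVec E) (y : ℕ → F)
    (n : ℕ) : ProbVec E :=
  filterList M μ (List.ofFn fun k : Fin n => y k)

/-- The filter transition kernel `Π`, acting on functions:
`Πf(μ) = ∫ f(μM(y)/(μM(y)1)) ⬝ (μM(y)1) φ(dy)`. -/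
noncomputable def filterKernel {E F : Type*} [MeasurableSpace F] (M : F → E → E → ℝ)
    (φ : Measure F) (f : ProbVec E → ℝ) (μ : ProbVec E) : ℝ :=
  ∫ y, f (filterStep M μ y) * rowTot (rowMul M (μ : E → ℝ) y) ∂φ

/-- Bounded continuous real functions on `P(E)`. -/
def IsBddCont {E : Type*} (f : ProbVec E → ℝ) : Prop :=
  Continuous f ∧ ∃ C : ℝ, ∀ μ, |f μ| ≤ C

/-- A probability measure `𝕄` on `P(E)` is `Π`-invariant if `∫ Πf d𝕄 = ∫ f d𝕄`
for every bounded continuous `f`. -/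
def IsPiInvariant {E F : Type*} [MeasurableSpace F] (M : F → E → E → ℝ) (φ : Measure F)
    (𝕄 : ProbabilityMeasure (ProbVec E)) : Prop :=
  ∀ f : ProbVec E → ℝ, IsBddCont f →
    ∫ μ, filterKernel M φ f μ ∂(𝕄 : Measure (ProbVec E)) =
      ∫ μ, f μ ∂(𝕄 : Measure (ProbVec E))

/-- The signal transition matrix `P_{ij} = ∫ M_{ij}(y) φ(dy)`. -/
noncomputable def transMat {E F : Type*} [MeasurableSpace F] (M : F → E → E → ℝ)
    (φ : Measure F) : E → E → ℝ :=
  fun i j => ∫ y, M y i j ∂φ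

/-- Powers of a transition matrix on a countable state space. -/
noncomputable def matPow {E : Type*} [DecidableEq E] (P : E → E → ℝ) : ℕ → E → E → ℝ
  | 0 => fun i j => if i = j then 1 else 0
  | n + 1 => fun i j => ∑' k, matPow P n i k * P k j

/-- The matrix product `M(y₁)⋯M(yₙ)` along a list of observations. -/
noncomputable def prodM {E F : Type*} [Fintype E] [DecidableEq E] (M : F → E → E → ℝ)
    (ys : List F) : Matrix E E ℝ :=
  (ys.map fun y => Matrix.of fun i j => M y i j).prod

/-!
Existence is the Krylov–Bogoliubov argument: `Π` is a positive unital operator on the continuous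
functions on the compact simplex `P(E)`, and an ultrafilter limit of its ergodic averages is an
invariant state.

For uniqueness, extend functions on `P(E)` to positively homogeneous functions on the cone of
nonnegative vectors. There the normalization of the filter disappears: `Πf(v) = ∑_y f(vM(y))`.
Consequently the failure of `Πf` to be additive along a family of vectors with sum `s` is the sum
over `y` of the failures of `f` along the images of the family under `M(y)`. For Lipschitz `f` this
failure is controlled by the oscillation of the densities of the members with respect to `s`.
No nonnegative matrix increases such an oscillation, and the subrectangular product contracts it by
a factor less than one, because its `2 × 2` minors are strictly dominated by its `2 × 2` permanents.
From every state that product is reached with probability bounded below, so the additivity failure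
of `Πⁿf` tends to zero uniformly. Hence `Πⁿf` is asymptotically affine, and for invariant `𝕄` the
integral `∫ f d𝕄 = ∫ Πⁿf d𝕄` depends on the barycenter of `𝕄` only. The barycenter is a stationary
distribution of the signal, and there is only one: the positive parts of the differences of two
stationary distributions are stationary, and if both were nonzero they would charge a common state
in the column support of the subrectangular product.
-/

section KrylovBogoliubov

variable {X : Type*} [TopologicalSpace X] [CompactSpace X]

lemma exists_probabilityMeasure_integral_eq [T2Space X] [MeasurableSpace X] [BorelSpace X]
    (Λ : C(X, ℝ) →ₚ[ℝ] ℝ) (hΛ : Λ 1 = 1) :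
    ∃ ν : ProbabilityMeasure X, ∀ f : C(X, ℝ), ∫ x, f x ∂(ν : Measure X) = Λ f := by
  let Λc : CompactlySupportedContinuousMap X ℝ →ₚ[ℝ] ℝ := .mk₀
    { toFun g := Λ g.toContinuousMap
      map_add' g h := map_add Λ g.toContinuousMap h.toContinuousMap
      map_smul' r g := map_smul Λ r g.toContinuousMap }
    fun g hg => map_nonneg Λ (show 0 ≤ g.toContinuousMap from hg)
  have hint (f : C(X, ℝ)) : ∫ x, f x ∂(RealRMK.rieszMeasure Λc) = Λ f :=
    RealRMK.integral_rieszMeasure Λc (CompactlySupportedContinuousMap.continuousMapEquiv f)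
  have huniv : (RealRMK.rieszMeasure Λc).real Set.univ = 1 := by simpa [hΛ] using hint 1
  exact ⟨⟨RealRMK.rieszMeasure Λc, ⟨(ENNReal.toReal_eq_one_iff _).1 huniv⟩⟩, hint⟩

lemma abs_iterate_apply_le_norm {T : C(X, ℝ) →ₚ[ℝ] C(X, ℝ)} (hT : T 1 = 1) (f : C(X, ℝ))
    (n : ℕ) (x : X) : |T^[n] f x| ≤ ‖f‖ := by
  have hconst : T (‖f‖ • 1) = ‖f‖ • 1 := by rw [map_smul, hT]
  have hmaps : Set.MapsTo T (Set.Icc (-(‖f‖ • 1)) (‖f‖ • 1)) (Set.Icc (-(‖f‖ • 1)) (‖f‖ • 1)) :=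
    fun g hg => ⟨by simpa only [map_neg, hconst] using OrderHomClass.mono T hg.1,
      by simpa only [hconst] using OrderHomClass.mono T hg.2⟩
  have hf : f ∈ Set.Icc (-(‖f‖ • 1)) (‖f‖ • 1) :=
    ⟨fun y => by simpa using (abs_le.1 (f.norm_coe_le_norm y)).1,
      fun y => by simpa using (abs_le.1 (f.norm_coe_le_norm y)).2⟩
  have hn := hmaps.iterate n hf
  exact abs_le.2 ⟨by simpa using hn.1 x, by simpa using hn.2 x⟩

lemma abs_birkhoffAverage_le {α : Type*} {T : α → α} {g : α → ℝ} {a : α} {C : ℝ} (hC : 0 ≤ C)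
    (h : ∀ n, |g (T^[n] a)| ≤ C) (n : ℕ) : |birkhoffAverage ℝ T g n a| ≤ C := by
  rcases n.eq_zero_or_pos with rfl | hn
  · simpa using hC
  rw [birkhoffAverage, birkhoffSum, smul_eq_mul, abs_mul, abs_inv, Nat.abs_cast,
    inv_mul_le_iff₀ (by positivity)]
  calc |∑ k ∈ Finset.range n, g (T^[k] a)|
      ≤ ∑ k ∈ Finset.range n, |g (T^[k] a)| := Finset.abs_sum_le_sum_abs _ _
    _ ≤ ∑ _k ∈ Finset.range n, C := Finset.sum_le_sum fun k _ => h k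
    _ = n * C := by simp

lemma tendsto_birkhoffAverage_map_sub {T : C(X, ℝ) →ₚ[ℝ] C(X, ℝ)} (hT : T 1 = 1) (x : X)
    (f : C(X, ℝ)) :
    Tendsto (fun n => birkhoffAverage ℝ T (· x) n (T f) - birkhoffAverage ℝ T (· x) n f)
      atTop (𝓝 0) := by
  refine tendsto_birkhoffAverage_apply_sub_birkhoffAverage (α := C(X, ℝ)) ℝ (g := (· x)) ?_
  refine (Metric.isBounded_Icc (-‖f‖) ‖f‖).subset ?_
  rintro _ ⟨n, rfl⟩
  exact abs_le.1 (abs_iterate_apply_le_norm hT f n x)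

lemma exists_invariant_positiveLinearMap [Nonempty X] {T : C(X, ℝ) →ₚ[ℝ] C(X, ℝ)} (hT : T 1 = 1) :
    ∃ Λ : C(X, ℝ) →ₚ[ℝ] ℝ, Λ 1 = 1 ∧ ∀ f, Λ (T f) = Λ f := by
  inhabit X
  let avg (f : C(X, ℝ)) (n : ℕ) : ℝ := birkhoffAverage ℝ T (· default) n f
  have hlim (f : C(X, ℝ)) : ∃ l, Tendsto (avg f) (hyperfilter ℕ) (𝓝 l) := by
    have hmem (n : ℕ) : avg f n ∈ Set.Icc (-‖f‖) ‖f‖ := abs_le.1 <|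
      abs_birkhoffAverage_le (norm_nonneg f) (fun k => abs_iterate_apply_le_norm hT f k default) n
    obtain ⟨l, -, hl⟩ := isCompact_Icc.ultrafilter_le_nhds' ((hyperfilter ℕ).map (avg f))
      (Ultrafilter.mem_map.2 <| univ_mem' hmem)
    exact ⟨l, hl⟩
  choose Λ hΛ using hlim
  have hadd (f g) : Λ (f + g) = Λ f + Λ g := by
    refine tendsto_nhds_unique (hΛ _) (((hΛ f).add (hΛ g)).congr fun n => ?_)
    simp [avg, birkhoffAverage, birkhoffSum, iterate_map_add, Finset.sum_add_distrib, mul_add]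
  have hsmul (r : ℝ) (f) : Λ (r • f) = r • Λ f := by
    refine tendsto_nhds_unique (hΛ _) (((hΛ f).const_smul r).congr fun n => ?_)
    have hiter (k : ℕ) : T^[k] (r • f) = r • T^[k] f :=
      ((Function.Commute.iterate_left fun g => map_smul T r g) k).eq f
    simp [avg, birkhoffAverage, birkhoffSum, hiter, Finset.mul_sum, mul_left_comm]
  have hnonneg (f) (hf : 0 ≤ f) : 0 ≤ Λ f :=
    ge_of_tendsto' (hΛ f) fun n => smul_nonneg (by positivity) <| Finset.sum_nonneg fun k _ =>
      Function.Iterate.rec (fun g : C(X, ℝ) => 0 ≤ g) hf (fun g hg => map_nonneg T hg) k default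
  refine ⟨.mk₀ { toFun := Λ, map_add' := hadd, map_smul' := hsmul } hnonneg, ?_, fun f => ?_⟩
  · have hone := (show Function.IsFixedPt T 1 from hT).tendsto_birkhoffAverage ℝ
      (fun g : C(X, ℝ) => g default)
    exact tendsto_nhds_unique (hΛ 1) (hone.mono_left Nat.hyperfilter_le_atTop)
  · exact sub_eq_zero.1 <| tendsto_nhds_unique ((hΛ (T f)).sub (hΛ f)) <|
      (tendsto_birkhoffAverage_map_sub hT default f).mono_left Nat.hyperfilter_le_atTop

theorem exists_probabilityMeasure_integral_map_eq [T2Space X] [Nonempty X] [MeasurableSpace X]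
    [BorelSpace X] {T : C(X, ℝ) →ₚ[ℝ] C(X, ℝ)} (hT : T 1 = 1) :
    ∃ ν : ProbabilityMeasure X, ∀ f : C(X, ℝ),
      ∫ x, T f x ∂(ν : Measure X) = ∫ x, f x ∂(ν : Measure X) := by
  obtain ⟨Λ, hΛ, hinv⟩ := exists_invariant_positiveLinearMap hT
  obtain ⟨ν, hν⟩ := exists_probabilityMeasure_integral_eq Λ hΛ
  exact ⟨ν, fun f => by rw [hν, hν, hinv]⟩

end KrylovBogoliubov

lemma eq_of_forall_lipschitz_integral_eq {X : Type*} [PseudoEMetricSpace X] [MeasurableSpace X]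
    [BorelSpace X] {ν ν' : ProbabilityMeasure X}
    (h : ∀ (f : X → ℝ) (L : NNReal), LipschitzWith L f →
      ∫ x, f x ∂(ν : Measure X) = ∫ x, f x ∂(ν' : Measure X)) : ν = ν' := by
  have hlim : Tendsto (fun _ : ℕ => ν) atTop (𝓝 ν') :=
    tendsto_iff_forall_lipschitz_integral_tendsto.2 fun f _ ⟨L, hL⟩ =>
      (h f L hL).symm ▸ tendsto_const_nhds
  exact tendsto_nhds_unique tendsto_const_nhds hlim

section Matrix

open Matrix

/-- A nonnegative matrix is subrectangular if the positions of its positive entries form a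
rectangle, i.e. a product of a set of rows with a set of columns. -/
def IsSubrectangular {m n : Type*} (N : Matrix m n ℝ) : Prop :=
  ∀ i j k l, 0 < N i j → 0 < N k l → 0 < N i l ∧ 0 < N k j

/-- The `2 × 2` minors of `N` are at most `θ` times the corresponding `2 × 2` permanents. For a
finite nonnegative matrix some `θ < 1` works exactly when the matrix is subrectangular, and `θ` is
then a contraction coefficient of `N` in the sense of `RatioOscLE.vecMul`. -/
def MinorLE {m n : Type*} (θ : ℝ) (N : Matrix m n ℝ) : Prop :=
  ∀ p q j k, |N p j * N q k - N p k * N q j| ≤ θ * (N p j * N q k + N p k * N q j)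

/-- The density `u / s` oscillates by at most `c`. The inequality is multiplied through by
`s j * s k`, so that no division by zero entries of `s` occurs. -/
def RatioOscLE {n : Type*} (c : ℝ) (u s : n → ℝ) : Prop :=
  ∀ j k, |u j * s k - u k * s j| ≤ c * (s j * s k)

variable {m n : Type*} {N : Matrix m n ℝ}

lemma minorLE_one_of_nonneg (hN : ∀ i j, 0 ≤ N i j) : MinorLE 1 N := fun p q j k => by
  simpa only [one_mul, abs_of_nonneg (mul_nonneg (hN _ _) (hN _ _))] using
    abs_sub (N p j * N q k) (N p k * N q j)

lemma IsSubrectangular.minor_pos (hsub : IsSubrectangular N) (hN : ∀ i j, 0 ≤ N i j)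
    {p q : m} {j k : n} (h : 0 < N p j * N q k) : 0 < N p k * N q j := by
  obtain ⟨hpj, hqk⟩ : 0 < N p j ∧ 0 < N q k :=
    ⟨pos_of_mul_pos_left h (hN q k), pos_of_mul_pos_right h (hN p j)⟩
  obtain ⟨hpk, hqj⟩ := hsub p j q k hpj hqk
  exact mul_pos hpk hqj

lemma abs_sub_lt_add {a b : ℝ} (ha : 0 < a) (hb : 0 < b) : |a - b| < a + b :=
  abs_sub_lt_iff.2 ⟨by linarith, by linarith⟩

lemma IsSubrectangular.exists_minorLE [Finite m] [Finite n] (hsub : IsSubrectangular N)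
    (hN : ∀ i j, 0 ≤ N i j) : ∃ θ, 0 ≤ θ ∧ θ < 1 ∧ MinorLE θ N := by
  have hminor (p q j k) : ∀ᶠ θ in 𝓝[<] (1 : ℝ),
      |N p j * N q k - N p k * N q j| ≤ θ * (N p j * N q k + N p k * N q j) := by
    rcases (mul_nonneg (hN p j) (hN q k)).eq_or_lt with ha | ha
    · have hb : N p k * N q j = 0 := by
        refine ((mul_nonneg (hN p k) (hN q j)).eq_of_not_lt fun hb => ?_).symm
        exact (hsub.minor_pos hN hb).ne ha
      simp [← ha, hb]
    · have hlim : Tendsto (fun θ : ℝ => θ * (N p j * N q k + N p k * N q j)) (𝓝[<] 1)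
          (𝓝 (1 * (N p j * N q k + N p k * N q j))) :=
        (tendsto_id.mul_const _).mono_left nhdsWithin_le_nhds
      rw [one_mul] at hlim
      exact hlim.eventually_const_le (abs_sub_lt_add ha (hsub.minor_pos hN ha))
  have hnonneg : ∀ᶠ θ in 𝓝[<] (1 : ℝ), 0 ≤ θ :=
    nhdsWithin_le_nhds (eventually_ge_nhds zero_lt_one)
  obtain ⟨θ, hθ, hθ0, hθ1⟩ := (((eventually_all.2 fun p => eventually_all.2 fun q =>
    eventually_all.2 fun j => eventually_all.2 fun k => hminor p q j k)).and
      (hnonneg.and self_mem_nhdsWithin)).exists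
  exact ⟨θ, hθ0, hθ1, hθ⟩

lemma ratioOscLE_one {u s : n → ℝ} (hu : 0 ≤ u) (hus : u ≤ s) : RatioOscLE 1 u s := fun j k => by
  have hjk : u j * s k ≤ s j * s k := mul_le_mul_of_nonneg_right (hus j) ((hu k).trans (hus k))
  have hkj : u k * s j ≤ s k * s j := mul_le_mul_of_nonneg_right (hus k) ((hu j).trans (hus j))
  have hjk' : 0 ≤ u j * s k := mul_nonneg (hu j) ((hu k).trans (hus k))
  have hkj' : 0 ≤ u k * s j := mul_nonneg (hu k) ((hu j).trans (hus j))
  exact abs_sub_le_iff.2 ⟨by linarith, by linarith⟩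

lemma two_mul_minor_vecMul [Fintype m] (u s : m → ℝ) (N : Matrix m n ℝ) (j k : n) :
    2 * ((u ᵥ* N) j * (s ᵥ* N) k - (u ᵥ* N) k * (s ᵥ* N) j) =
      ∑ p, ∑ q, (u p * s q - u q * s p) * (N p j * N q k - N p k * N q j) := by
  trans (u ᵥ* N) j * (s ᵥ* N) k - (u ᵥ* N) k * (s ᵥ* N) j
    - (s ᵥ* N) j * (u ᵥ* N) k + (s ᵥ* N) k * (u ᵥ* N) j
  · ring
  simp only [vecMul, dotProduct, Finset.sum_mul_sum, ← Finset.sum_sub_distrib,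
    ← Finset.sum_add_distrib]
  exact Finset.sum_congr rfl fun p _ => Finset.sum_congr rfl fun q _ => by ring

lemma two_mul_vecMul_mul_vecMul [Fintype m] (s : m → ℝ) (N : Matrix m n ℝ) (j k : n) :
    2 * ((s ᵥ* N) j * (s ᵥ* N) k) =
      ∑ p, ∑ q, s p * s q * (N p j * N q k + N p k * N q j) := by
  trans (s ᵥ* N) j * (s ᵥ* N) k + (s ᵥ* N) k * (s ᵥ* N) j
  · ring
  simp only [vecMul, dotProduct, Finset.sum_mul_sum, ← Finset.sum_add_distrib]
  exact Finset.sum_congr rfl fun p _ => Finset.sum_congr rfl fun q _ => by ring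

lemma RatioOscLE.vecMul [Fintype m] {c θ : ℝ} {u s : m → ℝ} (h : RatioOscLE c u s)
    (hN : MinorLE θ N) : RatioOscLE (θ * c) (u ᵥ* N) (s ᵥ* N) := fun j k => by
  suffices |2 * ((u ᵥ* N) j * (s ᵥ* N) k - (u ᵥ* N) k * (s ᵥ* N) j)| ≤
      θ * c * (2 * ((s ᵥ* N) j * (s ᵥ* N) k)) by
    rw [abs_mul, abs_two] at this
    linarith
  calc |2 * ((u ᵥ* N) j * (s ᵥ* N) k - (u ᵥ* N) k * (s ᵥ* N) j)|
      ≤ ∑ p, ∑ q, |u p * s q - u q * s p| * |N p j * N q k - N p k * N q j| := by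
        simp only [two_mul_minor_vecMul, ← abs_mul]
        exact (Finset.abs_sum_le_sum_abs _ _).trans
          (Finset.sum_le_sum fun p _ => Finset.abs_sum_le_sum_abs _ _)
    _ ≤ ∑ p, ∑ q, c * (s p * s q) * (θ * (N p j * N q k + N p k * N q j)) :=
        Finset.sum_le_sum fun p _ => Finset.sum_le_sum fun q _ =>
          mul_le_mul (h p q) (hN p q j k) (abs_nonneg _) ((abs_nonneg _).trans (h p q))
    _ = θ * c * (2 * ((s ᵥ* N) j * (s ᵥ* N) k)) := by
        simp only [two_mul_vecMul_mul_vecMul, Finset.mul_sum]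
        exact Finset.sum_congr rfl fun p _ => Finset.sum_congr rfl fun q _ => by ring

end Matrix

section ProbVec

variable {E : Type*}

lemma rowTot_nonneg {v : E → ℝ} (hv : 0 ≤ v) : 0 ≤ rowTot v := tsum_nonneg hv

lemma rowTot_smul (r : ℝ) (v : E → ℝ) : rowTot (r • v) = r * rowTot v := tsum_mul_left

lemma ProbVec.coe_nonneg (μ : ProbVec E) : 0 ≤ (μ : E → ℝ) := μ.2.1

lemma ProbVec.rowTot_coe (μ : ProbVec E) : rowTot (μ : E → ℝ) = 1 := μ.2.2.tsum_eq

lemma ProbVec.le_one (μ : ProbVec E) (i : E) : (μ : E → ℝ) i ≤ 1 :=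
  le_hasSum μ.2.2 i fun j _ => μ.2.1 j

lemma ProbVec.continuous_coe_apply (i : E) : Continuous fun μ : ProbVec E => (μ : E → ℝ) i :=
  (continuous_apply i).comp continuous_subtype_val

/-- The probability vector concentrated at `i`, a vertex of the simplex of probability vectors. -/
noncomputable def ProbVec.vertex [DecidableEq E] (i : E) : ProbVec E :=
  ⟨Pi.single i 1, (Pi.single_nonneg.2 zero_le_one : (0 : E → ℝ) ≤ Pi.single i 1),
    hasSum_pi_single i 1⟩

instance [Nonempty E] : Nonempty (ProbVec E) := by
  classical exact ⟨ProbVec.vertex (Classical.arbitrary E)⟩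

open Classical in
/-- The positively homogeneous extension of a function on probability vectors to the cone of
nonnegative vectors, with value `0` outside the cone. In terms of these extensions the filter
kernel involves no normalization, see `homExt_filterKernel`. -/
noncomputable def homExt (f : ProbVec E → ℝ) (v : E → ℝ) : ℝ :=
  if h : ∃ μ : ProbVec E, rowTot v • (μ : E → ℝ) = v then rowTot v * f h.choose else 0

lemma homExt_of_smul_eq (f : ProbVec E → ℝ) {v : E → ℝ} {μ : ProbVec E}
    (hμ : rowTot v • (μ : E → ℝ) = v) : homExt f v = rowTot v * f μ := by
  have h : ∃ ν : ProbVec E, rowTot v • (ν : E → ℝ) = v := ⟨μ, hμ⟩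
  rw [homExt, dif_pos h]
  rcases eq_or_ne (rowTot v) 0 with hv | hv
  · simp [hv]
  · rw [Subtype.ext (smul_right_injective _ hv (h.choose_spec.trans hμ.symm))]

lemma homExt_smul_coe (f : ProbVec E → ℝ) (r : ℝ) (μ : ProbVec E) :
    homExt f (r • (μ : E → ℝ)) = r * f μ := by
  have hr : rowTot (r • (μ : E → ℝ)) = r := by rw [rowTot_smul, μ.rowTot_coe, mul_one]
  rw [homExt_of_smul_eq f (μ := μ) (by rw [hr]), hr]

lemma homExt_coe (f : ProbVec E → ℝ) (μ : ProbVec E) : homExt f (μ : E → ℝ) = f μ := by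
  simpa using homExt_smul_coe f 1 μ

lemma rowTot_eq_sum [Fintype E] (v : E → ℝ) : rowTot v = ∑ i, v i := tsum_fintype _

lemma ProbVec.sum_smul_vertex [Fintype E] [DecidableEq E] (μ : ProbVec E) :
    ∑ i, (μ : E → ℝ) i • (vertex i : E → ℝ) = μ := by
  funext j
  simp [vertex, Pi.single_apply]

variable [Finite E]

lemma rowTot_sum {ι : Type*} (s : Finset ι) (a : ι → E → ℝ) :
    rowTot (∑ i ∈ s, a i) = ∑ i ∈ s, rowTot (a i) := by
  simp only [rowTot, Finset.sum_apply]
  exact Summable.tsum_finsetSum fun _ _ => .of_finite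

lemma rowTot_mono {u v : E → ℝ} (h : u ≤ v) : rowTot u ≤ rowTot v :=
  Summable.tsum_le_tsum h .of_finite .of_finite

lemma eq_of_le_of_rowTot_eq {u v : E → ℝ} (h : u ≤ v) (htot : rowTot u = rowTot v) : u = v := by
  cases nonempty_fintype E
  simp only [rowTot_eq_sum] at htot
  exact funext fun i =>
    (Finset.sum_eq_sum_iff_of_le fun i _ => h i).1 htot i (Finset.mem_univ i)

lemma rowTot_eq_zero_iff {v : E → ℝ} (hv : 0 ≤ v) : rowTot v = 0 ↔ v = 0 := by
  cases nonempty_fintype E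
  rw [rowTot_eq_sum, Fintype.sum_eq_zero_iff_of_nonneg hv]

instance : CompactSpace (ProbVec E) := by
  cases nonempty_fintype E
  have hset : {p : E → ℝ | (∀ i, 0 ≤ p i) ∧ HasSum p 1} = stdSimplex ℝ E :=
    Set.ext fun p => and_congr_right fun _ =>
      ⟨(hasSum_fintype p).unique, fun h => h ▸ hasSum_fintype p⟩
  have hcompact := isCompact_stdSimplex ℝ E
  rw [← hset] at hcompact
  exact isCompact_iff_compactSpace.1 hcompact

variable [Nonempty E]

lemma exists_probVec_smul_eq {v : E → ℝ} (hv : 0 ≤ v) :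
    ∃ μ : ProbVec E, rowTot v • (μ : E → ℝ) = v := by
  by_cases h : v = 0
  · exact ⟨Classical.arbitrary _, by simp [h, rowTot]⟩
  · have htot : rowTot v ≠ 0 := (rowTot_eq_zero_iff hv).not.2 h
    have hsum : HasSum ((rowTot v)⁻¹ • v) 1 := by
      have h : HasSum v (rowTot v) := Summable.of_finite.hasSum
      replace h := h.const_smul (rowTot v)⁻¹
      rwa [ smul_eq_mul, inv_mul_cancel₀ htot] at h
    exact ⟨⟨_, smul_nonneg (inv_nonneg.2 (rowTot_nonneg hv)) hv, hsum⟩, smul_inv_smul₀ htot v⟩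

lemma homExt_smul (f : ProbVec E → ℝ) (r : ℝ) {v : E → ℝ} (hv : 0 ≤ v) :
    homExt f (r • v) = r * homExt f v := by
  obtain ⟨μ, hμ⟩ := exists_probVec_smul_eq hv
  rw [← hμ, smul_smul, homExt_smul_coe, homExt_smul_coe, mul_assoc]

lemma continuousOn_homExt {f : ProbVec E → ℝ} (hf : Continuous f) :
    ContinuousOn (homExt f) {v | 0 ≤ v ∧ rowTot v ≤ 1} := by
  let scale : Set.Icc (0 : ℝ) 1 × ProbVec E → {v : E → ℝ | 0 ≤ v ∧ rowTot v ≤ 1} := fun x =>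
    ⟨(x.1 : ℝ) • (x.2 : E → ℝ), smul_nonneg x.1.2.1 x.2.coe_nonneg, by
      rw [rowTot_smul, x.2.rowTot_coe, mul_one]; exact x.1.2.2⟩
  have hscale : Continuous scale := by fun_prop
  have hsurj : Function.Surjective scale := fun ⟨v, hv, hv1⟩ =>
    have ⟨μ, hμ⟩ := exists_probVec_smul_eq hv
    ⟨(⟨rowTot v, rowTot_nonneg hv, hv1⟩, μ), Subtype.ext hμ⟩
  have hcomp : Set.domRestrict _ (homExt f) ∘ scale = fun x => (x.1 : ℝ) * f x.2 :=
    funext fun x => homExt_smul_coe f x.1 x.2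
  rw [continuousOn_iff_continuous_domRestrict,
    (IsQuotientMap.of_surjective_continuous hsurj hscale).continuous_iff, hcomp]
  fun_prop

end ProbVec

section FilterKernel

open Matrix

variable {E F : Type*} {M : F → E → E → ℝ}

lemma rowMul_nonneg (hM : ∀ y i j, 0 ≤ M y i j) {v : E → ℝ} (hv : 0 ≤ v) (y : F) :
    0 ≤ rowMul M v y :=
  fun j => tsum_nonneg fun i => mul_nonneg (hv i) (hM y i j)

lemma rowIter_nonneg (hM : ∀ y i j, 0 ≤ M y i j) {v : E → ℝ} (hv : 0 ≤ v) (ys : List F) :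
    0 ≤ rowIter M v ys :=
  ys.foldlRecOn (rowMul M) (motive := fun v => 0 ≤ v) hv fun _ hv y _ => rowMul_nonneg hM hv y

lemma rowMul_smul (r : ℝ) (v : E → ℝ) (y : F) : rowMul M (r • v) y = r • rowMul M v y := by
  funext j
  simp only [rowMul, Pi.smul_apply, smul_eq_mul, mul_assoc, tsum_mul_left]

lemma rowMul_eq_vecMul [Fintype E] (M : F → E → E → ℝ) (v : E → ℝ) (y : F) :
    rowMul M v y = v ᵥ* Matrix.of (M y) := by
  funext j
  simp [rowMul, vecMul, dotProduct]

section Finite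

variable [Finite E]

lemma rowMul_sum {ι : Type*} (s : Finset ι) (a : ι → E → ℝ) (y : F) :
    rowMul M (∑ i ∈ s, a i) y = ∑ i ∈ s, rowMul M (a i) y := by
  cases nonempty_fintype E
  simp only [rowMul_eq_vecMul, sum_vecMul]

lemma continuous_rowMul (M : F → E → E → ℝ) (y : F) : Continuous fun v => rowMul M v y := by
  cases nonempty_fintype E
  simp only [rowMul_eq_vecMul]
  fun_prop

lemma rowMul_sub (v w : E → ℝ) (y : F) : rowMul M (v - w) y = rowMul M v y - rowMul M w y := by
  cases nonempty_fintype E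
  simp only [rowMul_eq_vecMul, sub_vecMul]

lemma rowMul_mono (hM : ∀ y i j, 0 ≤ M y i j) {v w : E → ℝ} (h : v ≤ w) (y : F) :
    rowMul M v y ≤ rowMul M w y := by
  rw [← sub_nonneg, ← rowMul_sub]
  exact rowMul_nonneg hM (sub_nonneg.2 h) y

variable [Nonempty E]

lemma rowTot_smul_filterStep (hM : ∀ y i j, 0 ≤ M y i j) (μ : ProbVec E) (y : F) :
    rowTot (rowMul M (μ : E → ℝ) y) • (filterStep M μ y : E → ℝ) = rowMul M (μ : E → ℝ) y := by
  have h : ∃ ν : ProbVec E, ∀ j,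
      (ν : E → ℝ) j * rowTot (rowMul M (μ : E → ℝ) y) = rowMul M (μ : E → ℝ) y j := by
    obtain ⟨ν, hν⟩ := exists_probVec_smul_eq (rowMul_nonneg hM μ.coe_nonneg y)
    exact ⟨ν, fun j => (mul_comm _ _).trans (congrFun hν j)⟩
  rw [filterStep, dif_pos h]
  exact funext fun j => (mul_comm _ _).trans (h.choose_spec j)

variable [Fintype F] [MeasurableSpace F] [MeasurableSingletonClass F]

lemma filterKernel_apply (hM : ∀ y i j, 0 ≤ M y i j) (f : ProbVec E → ℝ) (μ : ProbVec E) :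
    filterKernel M .count f μ = ∑ y, homExt f (rowMul M (μ : E → ℝ) y) := by
  rw [filterKernel, integral_count]
  exact Finset.sum_congr rfl fun y _ => by
    rw [homExt_of_smul_eq f (rowTot_smul_filterStep hM μ y), mul_comm]

lemma homExt_filterKernel (hM : ∀ y i j, 0 ≤ M y i j) (f : ProbVec E → ℝ) {v : E → ℝ}
    (hv : 0 ≤ v) : homExt (filterKernel M .count f) v = ∑ y, homExt f (rowMul M v y) := by
  obtain ⟨μ, hμ⟩ := exists_probVec_smul_eq hv
  rw [homExt_of_smul_eq _ hμ, filterKernel_apply hM, Finset.mul_sum]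
  refine Finset.sum_congr rfl fun y _ => ?_
  rw [← homExt_smul f _ (rowMul_nonneg hM μ.coe_nonneg y), ← rowMul_smul, hμ]

end Finite

variable [Fintype E]

lemma rowIter_eq_vecMul [DecidableEq E] (M : F → E → E → ℝ) (v : E → ℝ) (ys : List F) :
    rowIter M v ys = v ᵥ* prodM M ys := by
  induction ys generalizing v with
  | nil => simp [rowIter, prodM]
  | cons y ys ih =>
    rw [show rowIter M v (y :: ys) = rowIter M (rowMul M v y) ys from rfl, ih, rowMul_eq_vecMul,
      vecMul_vecMul]
    rfl

lemma prodM_append [DecidableEq E] (ys zs : List F) :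
    prodM M (ys ++ zs) = prodM M ys * prodM M zs := by
  simp [prodM]

lemma prodM_nonneg [DecidableEq E] (hM : ∀ y i j, 0 ≤ M y i j) (ys : List F) (i j : E) :
    0 ≤ prodM M ys i j := by
  have hrow : rowIter M (ProbVec.vertex i : E → ℝ) ys = prodM M ys i := by
    rw [rowIter_eq_vecMul]
    exact single_one_vecMul i _
  exact hrow ▸ rowIter_nonneg hM (ProbVec.coe_nonneg _) ys j

lemma prodM_append_pos [DecidableEq E] (hM : ∀ y i j, 0 ≤ M y i j) {ys zs : List F} {i k j : E}
    (hys : 0 < prodM M ys i k) (hzs : 0 < prodM M zs k j) : 0 < prodM M (ys ++ zs) i j := by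
  rw [prodM_append]
  exact Finset.sum_pos' (fun l _ => mul_nonneg (prodM_nonneg hM ys i l) (prodM_nonneg hM zs l j))
    ⟨k, Finset.mem_univ k, mul_pos hys hzs⟩

lemma exists_prodM_pos_of_row_ne_zero [DecidableEq E] (hM : ∀ y i j, 0 ≤ M y i j) {ys : List F}
    {i : E} (h : prodM M ys i ≠ 0) : ∃ j, 0 < prodM M ys i j :=
  (Function.ne_iff.1 h).imp fun j hj => (prodM_nonneg hM ys i j).lt_of_ne' hj

lemma mul_prodM_le_rowIter [DecidableEq E] (hM : ∀ y i j, 0 ≤ M y i j) {v : E → ℝ}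
    (hv : 0 ≤ v) (ys : List F) (i j : E) : v i * prodM M ys i j ≤ rowIter M v ys j := by
  rw [rowIter_eq_vecMul]
  exact Finset.single_le_sum (f := fun i => v i * prodM M ys i j)
    (fun i _ => mul_nonneg (hv i) (prodM_nonneg hM ys i j)) (Finset.mem_univ i)

lemma mul_rowTot_row_le_rowTot_rowIter [DecidableEq E] (hM : ∀ y i j, 0 ≤ M y i j) {v : E → ℝ}
    (hv : 0 ≤ v) (ys : List F) (i : E) :
    v i * rowTot (prodM M ys i) ≤ rowTot (rowIter M v ys) := by
  rw [← rowTot_smul]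
  exact rowTot_mono fun j => mul_prodM_le_rowIter hM hv ys i j

variable [Fintype F]

lemma sum_rowTot_rowMul (hP : ∀ i, ∑ y, ∑ j, M y i j = 1) (v : E → ℝ) :
    ∑ y, rowTot (rowMul M v y) = rowTot v := by
  calc ∑ y, rowTot (rowMul M v y) = ∑ y, ∑ i, ∑ j, v i * M y i j := by
        simp only [rowTot_eq_sum, rowMul, tsum_fintype]
        exact Finset.sum_congr rfl fun y _ => Finset.sum_comm
    _ = ∑ i, v i * ∑ y, ∑ j, M y i j := by
        simp only [Finset.mul_sum]
        exact Finset.sum_comm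
    _ = rowTot v := by simp [hP, rowTot_eq_sum]

lemma rowTot_rowMul_le (hM : ∀ y i j, 0 ≤ M y i j) (hP : ∀ i, ∑ y, ∑ j, M y i j = 1)
    {v : E → ℝ} (hv : 0 ≤ v) (y : F) : rowTot (rowMul M v y) ≤ rowTot v :=
  sum_rowTot_rowMul hP v ▸ Finset.single_le_sum (f := fun y => rowTot (rowMul M v y))
    (fun z _ => rowTot_nonneg (rowMul_nonneg hM hv z)) (Finset.mem_univ y)

variable [Nonempty E] [MeasurableSpace F] [MeasurableSingletonClass F]

lemma continuous_filterKernel (hM : ∀ y i j, 0 ≤ M y i j) (hP : ∀ i, ∑ y, ∑ j, M y i j = 1)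
    {f : ProbVec E → ℝ} (hf : Continuous f) : Continuous (filterKernel M .count f) := by
  simp only [funext (filterKernel_apply hM f)]
  refine continuous_finsetSum _ fun y _ => (continuousOn_homExt hf).comp_continuous
    ((continuous_rowMul M y).comp continuous_subtype_val) fun μ => ?_
  exact ⟨rowMul_nonneg hM μ.coe_nonneg y,
    (rowTot_rowMul_le hM hP μ.coe_nonneg y).trans_eq μ.rowTot_coe⟩

end FilterKernel

section Defect

variable {ι E : Type*} [Fintype ι] {f : ProbVec E → ℝ} {a : ι → E → ℝ} {c C : ℝ}

/-- The failure of the homogeneous extension of `f` to be additive along a family of vectors. -/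
noncomputable def defect (f : ProbVec E → ℝ) (a : ι → E → ℝ) : ℝ :=
  ∑ i, homExt f (a i) - homExt f (∑ i, a i)

/-- The defect of `f` along a nonnegative `ι`-indexed family is at most `C` times the oscillation
of the densities of the members with respect to their sum, times the total mass of the sum.
A small constant `C` means that `f` is close to an affine function. -/
def HasDefectBound (ι : Type*) [Fintype ι] (C : ℝ) (f : ProbVec E → ℝ) : Prop :=
  ∀ a : ι → E → ℝ, 0 ≤ a → ∀ c, 0 ≤ c → (∀ i, RatioOscLE c (a i) (∑ i, a i)) →
    |defect f a| ≤ C * c * rowTot (∑ i, a i)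

lemma le_sum_of_nonneg (ha : 0 ≤ a) (i : ι) : a i ≤ ∑ i, a i :=
  Finset.single_le_sum (fun j _ => ha j) (Finset.mem_univ i)

lemma HasDefectBound.mono {C' : ℝ} (h : HasDefectBound ι C f) (hC : C ≤ C') :
    HasDefectBound ι C' f := fun a ha c hc hosc =>
  (h a ha c hc hosc).trans <| mul_le_mul_of_nonneg_right (mul_le_mul_of_nonneg_right hC hc) <|
    rowTot_nonneg <| Finset.sum_nonneg fun i _ => ha i

lemma RatioOscLE.abs_sub_rowTot_le [Finite E] {u s : E → ℝ} (h : RatioOscLE c u s) (j : E) :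
    |u j * rowTot s - rowTot u * s j| ≤ c * (s j * rowTot s) := by
  cases nonempty_fintype E
  simp only [rowTot_eq_sum, Finset.mul_sum, Finset.sum_mul, ← Finset.sum_sub_distrib]
  exact (Finset.abs_sum_le_sum_abs _ _).trans (Finset.sum_le_sum fun k _ => h j k)

variable [Fintype E]

lemma rowTot_mul_dist_le {u s : E → ℝ} (h : RatioOscLE c u s) (hc : 0 ≤ c) (hu : 0 ≤ u)
    (hus : u ≤ s) {α β : ProbVec E} (hα : rowTot u • (α : E → ℝ) = u)
    (hβ : rowTot s • (β : E → ℝ) = s) : rowTot u * dist α β ≤ c * rowTot s := by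
  have hS : 0 ≤ rowTot s := rowTot_nonneg (hu.trans hus)
  have hdist : rowTot u * dist α β = dist u (rowTot u • (β : E → ℝ)) := by
    conv_rhs => rw [← hα, rowTot_smul, α.rowTot_coe, mul_one, dist_smul₀,
      Real.norm_of_nonneg (rowTot_nonneg hu)]
    rfl
  rw [hdist, dist_pi_le_iff (mul_nonneg hc hS)]
  intro j
  rcases hS.eq_or_lt with hS0 | hS0
  · have hu0 : u = 0 := (rowTot_eq_zero_iff hu).1 <|
      le_antisymm ((rowTot_mono hus).trans_eq hS0.symm) (rowTot_nonneg hu)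
    rw [← hS0, hu0]
    simp [rowTot]
  · have hsj : s j = rowTot s * (β : E → ℝ) j := (congrFun hβ j).symm
    refine le_of_mul_le_mul_right ?_ hS0
    calc dist (u j) ((rowTot u • (β : E → ℝ)) j) * rowTot s
        = |u j * rowTot s - rowTot u * s j| := by
          rw [Real.dist_eq, ← abs_of_pos hS0, ← abs_mul, abs_of_pos hS0, hsj, Pi.smul_apply,
            smul_eq_mul]
          ring_nf
      _ ≤ c * (s j * rowTot s) := h.abs_sub_rowTot_le j
      _ ≤ c * rowTot s * rowTot s := by
          rw [hsj, mul_assoc c]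
          gcongr
          exact mul_le_of_le_one_right hS (β.le_one j)

lemma hasDefectBound_of_lipschitzWith [Nonempty E] {L : NNReal} (hf : LipschitzWith L f) :
    HasDefectBound ι (Fintype.card ι * L) f := fun a ha c hc hosc => by
  choose α hα using fun i => exists_probVec_smul_eq (ha i)
  obtain ⟨β, hβ⟩ := exists_probVec_smul_eq (Finset.sum_nonneg fun i _ => ha i)
  have hdefect : defect f a = ∑ i, rowTot (a i) * (f (α i) - f β) := by
    rw [defect, homExt_of_smul_eq f hβ, rowTot_sum, Finset.sum_mul, ← Finset.sum_sub_distrib]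
    exact Finset.sum_congr rfl fun i _ => by rw [homExt_of_smul_eq f (hα i), mul_sub]
  have hterm (i : ι) : |rowTot (a i) * (f (α i) - f β)| ≤ L * (c * rowTot (∑ i, a i)) :=
    calc |rowTot (a i) * (f (α i) - f β)| ≤ rowTot (a i) * (L * dist (α i) β) := by
          rw [abs_mul, abs_of_nonneg (rowTot_nonneg (ha i))]
          exact mul_le_mul_of_nonneg_left (hf.dist_le_mul _ _) (rowTot_nonneg (ha i))
      _ = L * (rowTot (a i) * dist (α i) β) := by ring
      _ ≤ L * (c * rowTot (∑ i, a i)) := mul_le_mul_of_nonneg_left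
          (rowTot_mul_dist_le (hosc i) hc (ha i) (le_sum_of_nonneg ha i) (hα i) hβ) L.2
  calc |defect f a| ≤ ∑ i, |rowTot (a i) * (f (α i) - f β)| :=
        hdefect ▸ Finset.abs_sum_le_sum_abs _ _
    _ ≤ ∑ _i : ι, L * (c * rowTot (∑ i, a i)) := Finset.sum_le_sum fun i _ => hterm i
    _ = Fintype.card ι * L * c * rowTot (∑ i, a i) := by
        rw [Finset.sum_const, nsmul_eq_mul, Finset.card_univ]
        ring

lemma HasDefectBound.abs_sub_sum_vertex_le [DecidableEq E] (h : HasDefectBound E C f)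
    (μ : ProbVec E) : |∑ i, (μ : E → ℝ) i * f (.vertex i) - f μ| ≤ C := by
  have ha : 0 ≤ fun i => (μ : E → ℝ) i • (ProbVec.vertex i : E → ℝ) :=
    fun i => smul_nonneg (μ.2.1 i) (ProbVec.coe_nonneg _)
  have hbound := h _ ha 1 zero_le_one fun i => ratioOscLE_one (ha i) (le_sum_of_nonneg ha i)
  simpa only [defect, homExt_smul_coe, μ.sum_smul_vertex, homExt_coe, μ.rowTot_coe, mul_one]
    using hbound

end Defect

section Contraction

open Matrix

variable {ι E F : Type*} [Fintype ι] {M : F → E → E → ℝ} {f : ProbVec E → ℝ} {a : ι → E → ℝ}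
  {c C : ℝ}

lemma RatioOscLE.map_rowMul [Finite E] (hM : ∀ y i j, 0 ≤ M y i j) {u s : E → ℝ}
    (h : RatioOscLE c u s) (y : F) : RatioOscLE c (rowMul M u y) (rowMul M s y) := by
  cases nonempty_fintype E
  rw [rowMul_eq_vecMul, rowMul_eq_vecMul, ← one_mul c]
  exact h.vecMul (minorLE_one_of_nonneg (hM y))

lemma defect_filterKernel [Finite E] [Nonempty E] [Fintype F] [MeasurableSpace F]
    [MeasurableSingletonClass F] (hM : ∀ y i j, 0 ≤ M y i j) (f : ProbVec E → ℝ) (ha : 0 ≤ a) :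
    defect (filterKernel M .count f) a = ∑ y, defect f fun i => rowMul M (a i) y := by
  simp only [defect, Finset.sum_sub_distrib, ← rowMul_sum]
  rw [homExt_filterKernel hM f (Finset.sum_nonneg fun i _ => ha i), Finset.sum_comm]
  simp only [homExt_filterKernel hM f (ha _)]

variable [Fintype E]

lemma RatioOscLE.map_rowIter_append [DecidableEq E] (hM : ∀ y i j, 0 ≤ M y i j) {θ : ℝ}
    {ys : List F} (hys : MinorLE θ (prodM M ys)) {u s : E → ℝ} (h : RatioOscLE c u s)
    (us : List F) : RatioOscLE (θ * c) (rowIter M u (us ++ ys)) (rowIter M s (us ++ ys)) := by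
  simpa only [rowIter_eq_vecMul, prodM_append, vecMul_vecMul, one_mul] using
    (h.vecMul (minorLE_one_of_nonneg (prodM_nonneg hM us))).vecMul hys

lemma exists_word_mul_rowTot_le [DecidableEq E] [Nonempty E] (hM : ∀ y i j, 0 ≤ M y i j)
    {ys : List F} (hreach : ∀ i, ∃ us k, 0 < prodM M us i k ∧ prodM M ys k ≠ 0) :
    ∃ m : ℕ, ∃ ρ, 0 < ρ ∧ ρ ≤ 1 ∧ ∀ s : E → ℝ, 0 ≤ s → ∃ us : List F,
      (us ++ ys).length ≤ m ∧ ρ * rowTot s ≤ rowTot (rowIter M s (us ++ ys)) := by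
  choose us k hus hys using hreach
  obtain ⟨m, hm⟩ := Finite.exists_le fun i => (us i ++ ys).length
  obtain ⟨i₀, hi₀⟩ := Finite.exists_min fun i => rowTot (prodM M (us i ++ ys) i)
  have hrow : 0 < rowTot (prodM M (us i₀ ++ ys) i₀) := by
    obtain ⟨j, hj⟩ := exists_prodM_pos_of_row_ne_zero hM (hys i₀)
    rw [rowTot_eq_sum]
    exact Finset.sum_pos' (fun j _ => prodM_nonneg hM _ i₀ j)
      ⟨j, Finset.mem_univ j, prodM_append_pos hM (hus i₀) hj⟩
  have hcard : (0 : ℝ) < Fintype.card E := Nat.cast_pos.2 Fintype.card_pos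
  refine ⟨m, min (rowTot (prodM M (us i₀ ++ ys) i₀) / Fintype.card E) 1,
    lt_min (div_pos hrow hcard) one_pos, min_le_right _ _, fun s hs => ?_⟩
  obtain ⟨i, hi⟩ := Finite.exists_max s
  have hmax : rowTot s ≤ Fintype.card E * s i := by
    simpa [rowTot_eq_sum] using Finset.sum_le_card_nsmul Finset.univ s _ fun j _ => hi j
  refine ⟨us i, hm i, ?_⟩
  calc min (rowTot (prodM M (us i₀ ++ ys) i₀) / Fintype.card E) 1 * rowTot s
      ≤ rowTot (prodM M (us i ++ ys) i) / Fintype.card E * (Fintype.card E * s i) :=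
        mul_le_mul ((min_le_left _ _).trans (div_le_div_of_nonneg_right (hi₀ i) hcard.le)) hmax
          (rowTot_nonneg hs) (div_nonneg (rowTot_nonneg (prodM_nonneg hM _ i)) hcard.le)
    _ = s i * rowTot (prodM M (us i ++ ys) i) := by
        field_simp
    _ ≤ rowTot (rowIter M s (us i ++ ys)) := mul_rowTot_row_le_rowTot_rowIter hM hs _ i

variable [Fintype F] [Nonempty E] [MeasurableSpace F] [MeasurableSingletonClass F]

lemma HasDefectBound.map_filterKernel (hM : ∀ y i j, 0 ≤ M y i j)
    (hP : ∀ i, ∑ y, ∑ j, M y i j = 1) (h : HasDefectBound ι C f) :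
    HasDefectBound ι C (filterKernel M .count f) := fun a ha c hc hosc =>
  calc |defect (filterKernel M .count f) a|
      ≤ ∑ y, |defect f fun i => rowMul M (a i) y| :=
        defect_filterKernel hM f ha ▸ Finset.abs_sum_le_sum_abs _ _
    _ ≤ ∑ y, C * c * rowTot (∑ i, rowMul M (a i) y) := Finset.sum_le_sum fun y _ =>
        h _ (fun i => rowMul_nonneg hM (ha i) y) c hc fun i =>
          rowMul_sum Finset.univ a y ▸ (hosc i).map_rowMul hM y
    _ = C * c * rowTot (∑ i, a i) := by
        rw [← Finset.mul_sum]
        simp only [← rowMul_sum, sum_rowTot_rowMul hP]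

lemma HasDefectBound.iterate_filterKernel (hM : ∀ y i j, 0 ≤ M y i j)
    (hP : ∀ i, ∑ y, ∑ j, M y i j = 1) (h : HasDefectBound ι C f) (n : ℕ) :
    HasDefectBound ι C ((filterKernel M .count)^[n] f) :=
  Function.Iterate.rec _ h (fun _ hg => hg.map_filterKernel hM hP) n

/-- Among the summands `defect f (aM(z₁)⋯M(zₙ))` of `defect (Πⁿ f) a`, the one belonging to the
word `ys` is estimated with the smaller oscillation `c'`, all others with `c`. -/
lemma HasDefectBound.abs_defect_iterate_le (hM : ∀ y i j, 0 ≤ M y i j)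
    (hP : ∀ i, ∑ y, ∑ j, M y i j = 1) (h : HasDefectBound ι C f) {c' : ℝ} (hc : 0 ≤ c)
    (hc' : 0 ≤ c') (ys : List F) (ha : 0 ≤ a) (hosc : ∀ i, RatioOscLE c (a i) (∑ i, a i))
    (hosc' : ∀ i, RatioOscLE c' (rowIter M (a i) ys) (rowIter M (∑ i, a i) ys)) :
    |defect ((filterKernel M .count)^[ys.length] f) a| ≤
      C * c * rowTot (∑ i, a i) - C * (c - c') * rowTot (rowIter M (∑ i, a i) ys) := by
  classical
  induction ys generalizing a with
  | nil => exact (h a ha c' hc' hosc').trans_eq (by simp only [rowIter, List.foldl_nil]; ring)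
  | cons y ys ih =>
    rw [List.length_cons, Function.iterate_succ_apply', defect_filterKernel hM _ ha]
    set saving := C * (c - c') * rowTot (rowIter M (∑ i, a i) (y :: ys)) with hsaving
    have hpos (z : F) : 0 ≤ fun i => rowMul M (a i) z := fun i => rowMul_nonneg hM (ha i) z
    have hoscz (z : F) (i : ι) : RatioOscLE c (rowMul M (a i) z) (∑ i, rowMul M (a i) z) :=
      rowMul_sum Finset.univ a z ▸ (hosc i).map_rowMul hM z
    have hterm (z : F) :
        |defect ((filterKernel M .count)^[ys.length] f) fun i => rowMul M (a i) z| ≤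
          C * c * rowTot (rowMul M (∑ i, a i) z) - if z = y then saving else 0 := by
      rw [rowMul_sum]
      split_ifs with hz
      · subst hz
        simp only [rowIter, List.foldl_cons, rowMul_sum] at hosc' hsaving
        exact hsaving ▸ ih (hpos z) (hoscz z) hosc'
      · rw [sub_zero]
        exact h.iterate_filterKernel hM hP _ _ (hpos z) c hc (hoscz z)
    calc |∑ z, defect ((filterKernel M .count)^[ys.length] f) fun i => rowMul M (a i) z|
        ≤ ∑ z, (C * c * rowTot (rowMul M (∑ i, a i) z) - if z = y then saving else 0) :=
          (Finset.abs_sum_le_sum_abs _ _).trans (Finset.sum_le_sum fun z _ => hterm z)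
      _ = C * c * rowTot (∑ i, a i) - saving := by
          rw [Finset.sum_sub_distrib, ← Finset.mul_sum, sum_rowTot_rowMul hP]
          simp

variable [DecidableEq E]

lemma exists_iterate_hasDefectBound_mul (hM : ∀ y i j, 0 ≤ M y i j)
    (hP : ∀ i, ∑ y, ∑ j, M y i j = 1) {ys : List F} (hsub : IsSubrectangular (prodM M ys))
    (hreach : ∀ i, ∃ us k, 0 < prodM M us i k ∧ prodM M ys k ≠ 0) :
    ∃ m : ℕ, ∃ q, 0 ≤ q ∧ q < 1 ∧ ∀ C f, 0 ≤ C → HasDefectBound ι C f →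
      HasDefectBound ι (q * C) ((filterKernel M .count)^[m] f) := by
  obtain ⟨θ, hθ0, hθ1, hθ⟩ := hsub.exists_minorLE (prodM_nonneg hM ys)
  obtain ⟨m, ρ, hρ0, hρ1, hword⟩ := exists_word_mul_rowTot_le hM hreach
  have hκ0 : 0 < (1 - θ) * ρ := mul_pos (sub_pos.2 hθ1) hρ0
  refine ⟨m, 1 - (1 - θ) * ρ, ?_, by linarith, fun C f hC h a ha c hc hosc => ?_⟩
  · nlinarith
  set s := ∑ i, a i
  obtain ⟨us, hlen, hmass⟩ := hword s (Finset.sum_nonneg fun i _ => ha i)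
  have hbound := (h.iterate_filterKernel hM hP (m - (us ++ ys).length)).abs_defect_iterate_le hM hP
    hc (mul_nonneg hθ0 hc) (us ++ ys) ha hosc fun i => (hosc i).map_rowIter_append hM hθ us
  rw [← Function.iterate_add_apply, Nat.add_sub_cancel' hlen] at hbound
  calc _ ≤ C * c * rowTot s - C * (c - θ * c) * rowTot (rowIter M s (us ++ ys)) := hbound
    _ ≤ C * c * rowTot s - C * (c - θ * c) * (ρ * rowTot s) := by
        have : 0 ≤ C * (c - θ * c) := mul_nonneg hC (sub_nonneg.2 (mul_le_of_le_one_left hc hθ1.le))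
        gcongr
    _ = (1 - (1 - θ) * ρ) * C * c * rowTot s := by ring

theorem exists_iterate_hasDefectBound (hM : ∀ y i j, 0 ≤ M y i j)
    (hP : ∀ i, ∑ y, ∑ j, M y i j = 1) {ys : List F} (hsub : IsSubrectangular (prodM M ys))
    (hreach : ∀ i, ∃ us k, 0 < prodM M us i k ∧ prodM M ys k ≠ 0) (hC : 0 ≤ C)
    (h : HasDefectBound ι C f) {η : ℝ} (hη : 0 < η) :
    ∃ n, HasDefectBound ι η ((filterKernel M .count)^[n] f) := by
  obtain ⟨m, q, hq0, hq1, hmul⟩ := exists_iterate_hasDefectBound_mul (ι := ι) hM hP hsub hreach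
  have hpow (k : ℕ) :
      HasDefectBound ι (q ^ k * C) (((filterKernel M .count)^[m])^[k] f) := by
    induction k with
    | zero => simpa using h
    | succ k ih =>
      rw [Function.iterate_succ_apply', pow_succ', mul_assoc]
      exact hmul _ _ (by positivity) ih
  have hlim : Tendsto (fun k => q ^ k * C) atTop (𝓝 0) := by
    simpa using (tendsto_pow_atTop_nhds_zero_of_lt_one hq0 hq1).mul_const C
  obtain ⟨k, hk⟩ := (hlim.eventually_le_const hη).exists
  exact ⟨m * k, Function.iterate_mul (filterKernel M .count) m k ▸ (hpow k).mono hk⟩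

end Contraction

section Stationary

variable {E F : Type*} [Fintype F] {M : F → E → E → ℝ} {v w : E → ℝ}

/-- `v` is invariant under the signal transition matrix `∑ y, M y`. -/
def IsStationaryVec (M : F → E → E → ℝ) (v : E → ℝ) : Prop := ∑ y, rowMul M v y = v

lemma IsStationaryVec.sub [Finite E] (hv : IsStationaryVec M v) (hw : IsStationaryVec M w) :
    IsStationaryVec M (v - w) := by
  simp only [IsStationaryVec, rowMul_sub, Finset.sum_sub_distrib] at *
  rw [hv, hw]

lemma IsStationaryVec.rowIter_le [Finite E] (hM : ∀ y i j, 0 ≤ M y i j)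
    (hv : IsStationaryVec M v) (hv0 : 0 ≤ v) (ys : List F) : rowIter M v ys ≤ v :=
  ys.foldlRecOn (rowMul M) (motive := (· ≤ v)) le_rfl fun u hu y _ =>
    calc rowMul M u y ≤ rowMul M v y := rowMul_mono hM hu y
      _ ≤ ∑ y, rowMul M v y :=
        Finset.single_le_sum (fun y _ => rowMul_nonneg hM hv0 y) (Finset.mem_univ y)
      _ = v := hv

variable [Fintype E]

lemma IsStationaryVec.posPart (hM : ∀ y i j, 0 ≤ M y i j) (hP : ∀ i, ∑ y, ∑ j, M y i j = 1)
    (hv : IsStationaryVec M v) : IsStationaryVec M v⁺ := by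
  have hle : v⁺ ≤ ∑ y, rowMul M v⁺ y := by
    refine sup_le ?_ (Finset.sum_nonneg fun y _ => rowMul_nonneg hM (posPart_nonneg v) y)
    conv_lhs => rw [← show ∑ y, rowMul M v y = v from hv]
    exact Finset.sum_le_sum fun y _ => rowMul_mono hM (le_posPart v) y
  refine (eq_of_le_of_rowTot_eq hle ?_).symm
  rw [rowTot_sum, sum_rowTot_rowMul hP]

variable [DecidableEq E]

lemma IsStationaryVec.pos_of_prodM_pos (hM : ∀ y i j, 0 ≤ M y i j) (hv : IsStationaryVec M v)
    (hv0 : 0 ≤ v) {ys : List F} {i j : E} (hi : 0 < v i) (hij : 0 < prodM M ys i j) : 0 < v j :=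
  calc 0 < v i * prodM M ys i j := mul_pos hi hij
    _ ≤ rowIter M v ys j := mul_prodM_le_rowIter hM hv0 ys i j
    _ ≤ v j := hv.rowIter_le hM hv0 ys j

/-- Both vectors charge some row meeting the rectangle of positive entries of the subrectangular
matrix, hence all of its columns. -/
lemma IsStationaryVec.exists_pos_and_pos (hM : ∀ y i j, 0 ≤ M y i j) {ys : List F}
    (hsub : IsSubrectangular (prodM M ys))
    (hreach : ∀ i, ∃ us k, 0 < prodM M us i k ∧ prodM M ys k ≠ 0)
    (hv : IsStationaryVec M v) (hv0 : 0 ≤ v) (hw : IsStationaryVec M w) (hw0 : 0 ≤ w) {i l : E}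
    (hi : 0 < v i) (hl : 0 < w l) : ∃ j, 0 < v j ∧ 0 < w j := by
  obtain ⟨us, k, hik, hk⟩ := hreach i
  obtain ⟨us', k', hlk', hk'⟩ := hreach l
  obtain ⟨j, hkj⟩ := exists_prodM_pos_of_row_ne_zero hM hk
  obtain ⟨j', hkj'⟩ := exists_prodM_pos_of_row_ne_zero hM hk'
  have hvk : 0 < v k := hv.pos_of_prodM_pos hM hv0 hi hik
  have hwk' : 0 < w k' := hw.pos_of_prodM_pos hM hw0 hl hlk'
  exact ⟨j, hv.pos_of_prodM_pos hM hv0 hvk hkj,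
    hw.pos_of_prodM_pos hM hw0 hwk' (hsub k j k' j' hkj hkj').2⟩

theorem IsStationaryVec.eq_of_rowTot_eq (hM : ∀ y i j, 0 ≤ M y i j)
    (hP : ∀ i, ∑ y, ∑ j, M y i j = 1) {ys : List F} (hsub : IsSubrectangular (prodM M ys))
    (hreach : ∀ i, ∃ us k, 0 < prodM M us i k ∧ prodM M ys k ≠ 0)
    (hv : IsStationaryVec M v) (hw : IsStationaryVec M w) (h : rowTot v = rowTot w) : v = w := by
  by_cases hvw : v ≤ w
  · exact eq_of_le_of_rowTot_eq hvw h
  by_cases hwv : w ≤ v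
  · exact (eq_of_le_of_rowTot_eq hwv h.symm).symm
  obtain ⟨i, hi⟩ : ∃ i, w i < v i := by simpa [Pi.le_def] using hvw
  obtain ⟨l, hl⟩ : ∃ l, v l < w l := by simpa [Pi.le_def] using hwv
  obtain ⟨j, hj, hj'⟩ := IsStationaryVec.exists_pos_and_pos hM hsub hreach
    ((hv.sub hw).posPart hM hP) (posPart_nonneg _) ((hw.sub hv).posPart hM hP) (posPart_nonneg _)
    (i := i) (l := l) (by simpa using hi) (by simpa using hl)
  simp only [Pi.posPart_apply, Pi.sub_apply, posPart_pos_iff, sub_pos] at hj hj'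
  exact absurd hj hj'.not_gt

end Stationary

section InvariantMeasure

variable {E F : Type*}

lemma integrable_of_continuous [Finite E] {f : ProbVec E → ℝ} (hf : Continuous f)
    (ν : ProbabilityMeasure (ProbVec E)) : Integrable f (ν : Measure (ProbVec E)) :=
  hf.integrable_of_hasCompactSupport (HasCompactSupport.of_compactSpace f)

lemma isBddCont_of_continuous [Finite E] {f : ProbVec E → ℝ} (hf : Continuous f) :
    IsBddCont f := by
  obtain ⟨C, hC⟩ := isCompact_univ.exists_bound_of_continuousOn hf.continuousOn
  exact ⟨hf, C, fun μ => hC μ (Set.mem_univ μ)⟩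

/-- The mean probability vector of a distribution on `P(E)`. -/
noncomputable def barycenter (ν : ProbabilityMeasure (ProbVec E)) : E → ℝ :=
  fun i => ∫ μ, (μ : E → ℝ) i ∂(ν : Measure (ProbVec E))

lemma rowTot_barycenter [Finite E] (ν : ProbabilityMeasure (ProbVec E)) :
    rowTot (barycenter ν) = 1 := by
  cases nonempty_fintype E
  simp only [rowTot_eq_sum, barycenter]
  rw [← integral_finsetSum _ fun i _ =>
    integrable_of_continuous (ProbVec.continuous_coe_apply i) ν]
  simp [← rowTot_eq_sum, ProbVec.rowTot_coe]

lemma HasDefectBound.abs_sum_barycenter_sub_integral_le [Fintype E] [DecidableEq E]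
    {f : ProbVec E → ℝ} {C : ℝ} (h : HasDefectBound E C f) (hf : Continuous f)
    (ν : ProbabilityMeasure (ProbVec E)) :
    |∑ i, barycenter ν i * f (.vertex i) - ∫ μ, f μ ∂(ν : Measure (ProbVec E))| ≤ C := by
  have hcont (i : E) : Continuous fun μ : ProbVec E => (μ : E → ℝ) i * f (.vertex i) :=
    (ProbVec.continuous_coe_apply i).mul_const _
  have hint : ∑ i, barycenter ν i * f (.vertex i) - ∫ μ, f μ ∂(ν : Measure (ProbVec E)) =
      ∫ μ, (∑ i, (μ : E → ℝ) i * f (.vertex i) - f μ) ∂(ν : Measure (ProbVec E)) := by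
    rw [integral_sub (integrable_of_continuous (continuous_finsetSum _ fun i _ => hcont i) ν)
      (integrable_of_continuous hf ν),
      integral_finsetSum _ fun i _ => integrable_of_continuous (hcont i) ν]
    simp only [barycenter, integral_mul_const]
  rw [hint]
  have hnorm := norm_integral_le_of_norm_le_const (μ := (ν : Measure (ProbVec E)))
    (.of_forall fun μ => (Real.norm_eq_abs _).trans_le (h.abs_sub_sum_vertex_le μ))
  simpa using hnorm

variable [Fintype F] [Nonempty E] [MeasurableSpace F] [MeasurableSingletonClass F]
  {M : F → E → E → ℝ}

lemma IsPiInvariant.isStationaryVec_barycenter [Finite E] (hM : ∀ y i j, 0 ≤ M y i j)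
    {ν : ProbabilityMeasure (ProbVec E)} (hν : IsPiInvariant M .count ν) :
    IsStationaryVec M (barycenter ν) := by
  cases nonempty_fintype E
  funext j
  have hcoord (μ : ProbVec E) :
      filterKernel M .count (fun μ => (μ : E → ℝ) j) μ = ∑ y, ∑ i, (μ : E → ℝ) i * M y i j := by
    rw [filterKernel_apply hM]
    refine Finset.sum_congr rfl fun y _ => ?_
    obtain ⟨α, hα⟩ := exists_probVec_smul_eq (rowMul_nonneg hM μ.coe_nonneg y)
    rw [homExt_of_smul_eq _ hα]
    exact (congrFun hα j).trans (tsum_fintype _)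
  have hcont (y : F) (i : E) : Continuous fun μ : ProbVec E => (μ : E → ℝ) i * M y i j :=
    (ProbVec.continuous_coe_apply i).mul_const _
  have hinv := hν (fun μ => (μ : E → ℝ) j)
    (isBddCont_of_continuous (ProbVec.continuous_coe_apply j))
  simp only [hcoord] at hinv
  rw [integral_finsetSum _ fun y _ =>
    integrable_of_continuous (continuous_finsetSum _ fun i _ => hcont y i) ν] at hinv
  simp only [Finset.sum_apply, rowMul, tsum_fintype]
  refine (Finset.sum_congr rfl fun y _ => ?_).trans hinv
  rw [integral_finsetSum _ fun i _ => integrable_of_continuous (hcont y i) ν]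
  simp only [barycenter, integral_mul_const]

variable [Fintype E]

lemma continuous_iterate_filterKernel (hM : ∀ y i j, 0 ≤ M y i j)
    (hP : ∀ i, ∑ y, ∑ j, M y i j = 1) {f : ProbVec E → ℝ} (hf : Continuous f) (n : ℕ) :
    Continuous ((filterKernel M .count)^[n] f) :=
  Function.Iterate.rec _ hf (fun _ hg => continuous_filterKernel hM hP hg) n

lemma IsPiInvariant.integral_iterate (hM : ∀ y i j, 0 ≤ M y i j)
    (hP : ∀ i, ∑ y, ∑ j, M y i j = 1) {ν : ProbabilityMeasure (ProbVec E)}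
    (hν : IsPiInvariant M .count ν) {f : ProbVec E → ℝ} (hf : Continuous f) (n : ℕ) :
    ∫ μ, (filterKernel M .count)^[n] f μ ∂(ν : Measure (ProbVec E)) =
      ∫ μ, f μ ∂(ν : Measure (ProbVec E)) := by
  induction n with
  | zero => rfl
  | succ n ih =>
    rw [Function.iterate_succ_apply', ← ih]
    exact hν _ (isBddCont_of_continuous (continuous_iterate_filterKernel hM hP hf n))

theorem IsPiInvariant.eq_of_isSubrectangular [DecidableEq E] (hM : ∀ y i j, 0 ≤ M y i j)
    (hP : ∀ i, ∑ y, ∑ j, M y i j = 1) {ys : List F} (hsub : IsSubrectangular (prodM M ys))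
    (hreach : ∀ i, ∃ us k, 0 < prodM M us i k ∧ prodM M ys k ≠ 0)
    {ν ν' : ProbabilityMeasure (ProbVec E)} (hν : IsPiInvariant M .count ν)
    (hν' : IsPiInvariant M .count ν') : ν = ν' := by
  have hbary : barycenter ν = barycenter ν' :=
    (hν.isStationaryVec_barycenter hM).eq_of_rowTot_eq hM hP hsub hreach
      (hν'.isStationaryVec_barycenter hM) (by rw [rowTot_barycenter, rowTot_barycenter])
  refine eq_of_forall_lipschitz_integral_eq fun f L hf => eq_of_forall_dist_le fun ε hε => ?_
  obtain ⟨n, hn⟩ := exists_iterate_hasDefectBound hM hP hsub hreach (by positivity)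
    (hasDefectBound_of_lipschitzWith (ι := E) hf) (half_pos hε)
  have hcont := continuous_iterate_filterKernel hM hP hf.continuous n
  have hdist := hn.abs_sum_barycenter_sub_integral_le hcont ν
  have hdist' := hn.abs_sum_barycenter_sub_integral_le hcont ν'
  rw [hν.integral_iterate hM hP hf.continuous, hbary, ← Real.dist_eq] at hdist
  rw [hν'.integral_iterate hM hP hf.continuous, ← Real.dist_eq] at hdist'
  exact (dist_triangle_left _ _ _).trans ((add_le_add hdist hdist').trans_eq (add_halves ε))

theorem exists_isPiInvariant (hM : ∀ y i j, 0 ≤ M y i j) (hP : ∀ i, ∑ y, ∑ j, M y i j = 1) :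
    ∃ ν : ProbabilityMeasure (ProbVec E), IsPiInvariant M .count ν := by
  let T : C(ProbVec E, ℝ) →ₚ[ℝ] C(ProbVec E, ℝ) := .mk₀
    { toFun f := ⟨filterKernel M .count f, continuous_filterKernel hM hP f.continuous⟩
      map_add' f g := by
        ext μ
        simp [filterKernel, add_mul, Finset.sum_add_distrib]
      map_smul' r f := by
        ext μ
        simp [filterKernel, mul_assoc, Finset.mul_sum] }
    fun f hf μ => integral_nonneg fun y =>
      mul_nonneg (hf _) (rowTot_nonneg (rowMul_nonneg hM μ.coe_nonneg y))
  have hT : T 1 = 1 := by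
    ext μ
    have h := sum_rowTot_rowMul hP (μ : E → ℝ)
    rw [μ.rowTot_coe] at h
    change filterKernel M .count (fun _ => 1) μ = 1
    simpa [filterKernel] using h
  obtain ⟨ν, hν⟩ := exists_probabilityMeasure_integral_map_eq hT
  exact ⟨ν, fun f hf => hν ⟨f, hf.1⟩⟩

end InvariantMeasure

section Uniqueness

variable {E F : Type*} [MeasurableSpace F] [MeasurableSingletonClass F]
  {M : F → E → E → ℝ}

lemma transMat_count [Fintype F] (M : F → E → E → ℝ) (i j : E) :
    transMat M (Measure.count : Measure F) i j = ∑ y, M y i j := by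
  simp [transMat, integral_count]

variable [Fintype E]

lemma sum_sum_eq_one_of_hasSum_transMat [Fintype F]
    (hP : ∀ i, HasSum (fun j => transMat M (Measure.count : Measure F) i j) 1) (i : E) :
    ∑ y, ∑ j, M y i j = 1 := by
  simp only [transMat_count] at hP
  rw [Finset.sum_comm]
  exact (hasSum_fintype _).unique (hP i)

variable [Finite F] [DecidableEq E]

lemma exists_prodM_pos_of_matPow_pos (hM : ∀ y i j, 0 ≤ M y i j) {n : ℕ} {i j : E}
    (h : 0 < matPow (transMat M (Measure.count : Measure F)) n i j) :
    ∃ us, 0 < prodM M us i j := by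
  cases nonempty_fintype F
  induction n generalizing j with
  | zero => exact ⟨[], by simpa [prodM, matPow, Matrix.one_apply] using h⟩
  | succ n ih =>
    simp only [matPow, tsum_fintype, transMat_count] at h
    obtain ⟨k, -, hk⟩ :=
      Finset.exists_lt_of_sum_lt ((Finset.sum_const_zero (s := .univ)).trans_lt h)
    have hstep : 0 ≤ ∑ y, M y k j := Finset.sum_nonneg fun y _ => hM y k j
    obtain ⟨us, hus⟩ := ih (pos_of_mul_pos_left hk hstep)
    obtain ⟨y, -, hy⟩ := Finset.exists_ne_zero_of_sum_ne_zero (right_ne_zero_of_mul hk.ne')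
    have hyk : 0 < prodM M [y] k j := by simpa [prodM] using (hM y k j).lt_of_ne' hy
    exact ⟨us ++ [y], prodM_append_pos hM hus hyk⟩

theorem unique_invariant_measure_of_subrectangular_general [Nonempty E]
    (hM : ∀ y i j, 0 ≤ M y i j)
    (hP : ∀ i, HasSum (fun j => transMat M (Measure.count : Measure F) i j) 1)
    {ys : List F} (hsub : IsSubrectangular (prodM M ys))
    (hreach : ∀ i, ∃ n k,
      0 < matPow (transMat M (Measure.count : Measure F)) n i k ∧ prodM M ys k ≠ 0) :
    ∃! 𝕄 : ProbabilityMeasure (ProbVec E), IsPiInvariant M (Measure.count : Measure F) 𝕄 := by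
  cases nonempty_fintype F
  have hP' := sum_sum_eq_one_of_hasSum_transMat hP
  have hreach' (i : E) : ∃ us k, 0 < prodM M us i k ∧ prodM M ys k ≠ 0 := by
    obtain ⟨n, k, hpow, hk⟩ := hreach i
    obtain ⟨us, hus⟩ := exists_prodM_pos_of_matPow_pos hM hpow
    exact ⟨us, k, hus, hk⟩
  obtain ⟨ν, hν⟩ := exists_isPiInvariant hM hP'
  exact ⟨ν, hν, fun ν' hν' => hν'.eq_of_isSubrectangular hM hP' hsub hreach' hν⟩

end Uniqueness

/-- Kaijser's theorem: if `E` and `F` are finite, `φ` is counting measure, the signal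
transition matrix is aperiodic, and some finite product `M(y₁)⋯M(yₙ)` is nonzero and
subrectangular, then the filter transition kernel `Π` admits a unique invariant
probability measure. -/
theorem unique_invariant_measure_of_subrectangular
    {E : Type*} [Fintype E] [Nonempty E] [DecidableEq E]
    {F : Type*} [Fintype F] [MeasurableSpace F] [MeasurableSingletonClass F]
    (M : F → E → E → ℝ)
    (hMnn : ∀ y i j, 0 ≤ M y i j)
    (hPtrans : ∀ i, HasSum (fun j => transMat M (Measure.count : Measure F) i j) 1)
    (hPirr : ∀ i j : E, ∃ n : ℕ,
      0 < matPow (transMat M (Measure.count : Measure F)) n i j)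
    (lam : ProbVec E)
    (hlamInv : ∀ j, ∑' i,
      (lam : E → ℝ) i * transMat M (Measure.count : Measure F) i j = (lam : E → ℝ) j)
    (hlamUniq : ∀ ρ : ProbVec E,
      (∀ j, ∑' i, (ρ : E → ℝ) i * transMat M (Measure.count : Measure F) i j
        = (ρ : E → ℝ) j) → ρ = lam)
    (hAper : ∀ i : E, ∃ N : ℕ, ∀ n ≥ N,
      0 < matPow (transMat M (Measure.count : Measure F)) n i i)
    (hsub : ∃ ys : List F, ys ≠ [] ∧ prodM M ys ≠ 0 ∧
      ∀ i j k l : E, 0 < prodM M ys i j → 0 < prodM M ys k l →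
        0 < prodM M ys i l ∧ 0 < prodM M ys k j) :
    ∃! 𝕄 : ProbabilityMeasure (ProbVec E), IsPiInvariant M (Measure.count : Measure F) 𝕄 := by
  obtain ⟨ys, -, hne, hsub⟩ := hsub
  obtain ⟨k, hk⟩ := Function.ne_iff.1 hne
  exact unique_invariant_measure_of_subrectangular_general hMnn hPtrans hsub fun i =>
    (hPirr i k).imp fun n hn => ⟨k, hn, hk⟩
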